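/- The family of context-free languages of finite index is strictly contained in the union over all k ∈ ℕ of the families of languages generated by CD grammar systems with at most two context-free components working in the (t∧=k)-mode: L_fin(CF) ⊊ ⋃_{k∈ℕ} L(CD_2, CF[−λ], (t∧=k)), both with and without erasing rules. -/

import Mathlib

namespace CDHybrid

/-- Symbols: nonterminals are natural numbers, terminals come from `T`. -/
abbrev Symb (T : Type) := ℕ ⊕ T

/-- Sentential forms. -/
abbrev SForm (T : Type) := List (Symb T)

/-- A context-free rule `A → z`. -/
abbrev Rule (T : Type) := ℕ × SForm T

/-- Number of nonterminal occurrences in a sentential form. -/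
def ntCount {T : Type} (x : SForm T) : ℕ := (x.filter Sum.isLeft).length

/-- One rewriting step using some rule of the rule set `P`. -/
def RStep {T : Type} (P : List (Rule T)) (x y : SForm T) : Prop :=
  ∃ r ∈ P, ∃ u v : SForm T, x = u ++ Sum.inl r.1 :: v ∧ y = u ++ r.2 ++ v

/-- `m`-step derivation using only rules of `P`. -/
def StepsN {T : Type} (P : List (Rule T)) : ℕ → SForm T → SForm T → Prop
  | 0, x, y => x = y
  | m + 1, x, y => ∃ z, RStep P x z ∧ StepsN P m z y

/-- `m`-step derivation using only rules of `P`, all intermediate (and the final)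
sentential forms having at most `b` occurrences of nonterminals. -/
def StepsNB {T : Type} (P : List (Rule T)) (b : ℕ) : ℕ → SForm T → SForm T → Prop
  | 0, x, y => x = y
  | m + 1, x, y => ∃ z, RStep P x z ∧ ntCount z ≤ b ∧ StepsNB P b m z y

/-- Derivation modes of CD grammar systems. -/
inductive Mode where
  | eq : ℕ → Mode
  | le : ℕ → Mode
  | ge : ℕ → Mode
  | star : Mode
  | t : Mode
  | conj : Mode → Mode → Mode

/-- The predicate of a derivation mode: `modeOK P f m y` holds if an `m`-step
derivation by the component `P` ending in `y` is acceptable for mode `f`. -/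
def modeOK {T : Type} (P : List (Rule T)) : Mode → ℕ → SForm T → Prop
  | .eq k, m, _ => m = k
  | .le k, m, _ => m ≤ k
  | .ge k, m, _ => k ≤ m
  | .star, _, _ => True
  | .t, _, y => ¬ ∃ z, RStep P y z
  | .conj f g, m, y => modeOK P f m y ∧ modeOK P g m y

/-- A CD grammar system with context-free components. -/
structure CDGS (T : Type) where
  deg : ℕ
  start : ℕ
  comp : Fin deg → List (Rule T)

/-- λ-freeness: no erasing rules. -/
def CDGS.LamFree {T : Type} (G : CDGS T) : Prop :=
  ∀ i : Fin G.deg, ∀ r ∈ G.comp i, r.2 ≠ []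

/-- One derivation step of a component of `G` in mode `f`. -/
def CDGS.ModeStep {T : Type} (G : CDGS T) (f : Mode) (x y : SForm T) : Prop :=
  ∃ i : Fin G.deg, ∃ m : ℕ, StepsN (G.comp i) m x y ∧ modeOK (G.comp i) f m y

/-- One derivation step of a component of `G` in mode `f`, with all produced
sentential forms having at most `b` nonterminal occurrences. -/
def CDGS.ModeStepB {T : Type} (G : CDGS T) (f : Mode) (b : ℕ) (x y : SForm T) : Prop :=
  ∃ i : Fin G.deg, ∃ m : ℕ, StepsNB (G.comp i) b m x y ∧ modeOK (G.comp i) f m y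

/-- The language generated by `G` in mode `f`. -/
def CDGS.lang {T : Type} (G : CDGS T) (f : Mode) : Set (List T) :=
  { w | Relation.TransGen (G.ModeStep f) [Sum.inl G.start] (w.map Sum.inr) }

/-- The words of the language of `G` in mode `f` possessing a derivation of index
at most `b`, i.e., all sentential forms occurring in it have at most `b`
nonterminal occurrences. -/
def CDGS.langB {T : Type} (G : CDGS T) (f : Mode) (b : ℕ) : Set (List T) :=
  { w | ntCount ([Sum.inl G.start] : SForm T) ≤ b ∧
      Relation.TransGen (G.ModeStepB f b) [Sum.inl G.start] (w.map Sum.inr) }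

/-- Two languages are considered equal iff they differ at most in the empty word. -/
def EqL {T : Type} (L₁ L₂ : Set (List T)) : Prop := L₁ \ {[]} = L₂ \ {[]}

/-- The family `L(CD_n, CF[−λ], f)`; `lf = true` forbids erasing rules. -/
def CDFam (T : Type) (lf : Bool) (n : ℕ) (f : Mode) : Set (Set (List T)) :=
  { L | ∃ G : CDGS T, G.deg ≤ n ∧ (lf = true → G.LamFree) ∧ EqL (G.lang f) L }

/-- The family `L(CD_∞, CF[−λ], f)`. -/
def CDFamInf (T : Type) (lf : Bool) (f : Mode) : Set (Set (List T)) :=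
  { L | ∃ G : CDGS T, (lf = true → G.LamFree) ∧ EqL (G.lang f) L }

/-- The family `L_m(CD_n, CF[−λ], f)` of such languages of index at most `m`. -/
def CDFamInd (T : Type) (lf : Bool) (n : ℕ) (f : Mode) (m : ℕ) : Set (Set (List T)) :=
  { L | ∃ G : CDGS T, G.deg ≤ n ∧ (lf = true → G.LamFree) ∧ EqL (G.lang f) L ∧
      G.lang f ⊆ G.langB f m }

/-- The family `L_m(CD_∞, CF[−λ], f)`. -/
def CDFamIndInf (T : Type) (lf : Bool) (f : Mode) (m : ℕ) : Set (Set (List T)) :=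
  { L | ∃ G : CDGS T, (lf = true → G.LamFree) ∧ EqL (G.lang f) L ∧ G.lang f ⊆ G.langB f m }

/-- The family `L_fin(CD_∞, CF[−λ], f)`. -/
def CDFamFinInf (T : Type) (lf : Bool) (f : Mode) : Set (Set (List T)) :=
  { L | ∃ m : ℕ, 1 ≤ m ∧ L ∈ CDFamIndInf T lf f m }

/-- A context-free grammar. -/
structure CFG (T : Type) where
  start : ℕ
  rules : List (Rule T)

/-- The language generated by a context-free grammar. -/
def CFG.lang {T : Type} (G : CFG T) : Set (List T) :=
  { w | Relation.ReflTransGen (RStep G.rules) [Sum.inl G.start] (w.map Sum.inr) }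

/-- The words of `G.lang` having a derivation of index at most `m`. -/
def CFG.langB {T : Type} (G : CFG T) (m : ℕ) : Set (List T) :=
  { w | ntCount ([Sum.inl G.start] : SForm T) ≤ m ∧
      Relation.ReflTransGen (fun x y => RStep G.rules x y ∧ ntCount y ≤ m)
        [Sum.inl G.start] (w.map Sum.inr) }

/-- The family `L(CF)` of context-free languages. -/
def CFFam (T : Type) : Set (Set (List T)) := { L | ∃ G : CFG T, EqL G.lang L }

/-- The family `L_m(CF)` of context-free languages of index at most `m`. -/
def CFFamInd (T : Type) (m : ℕ) : Set (Set (List T)) :=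
  { L | ∃ G : CFG T, EqL G.lang L ∧ G.lang ⊆ G.langB m }

/-- The family `L_fin(CF)` of context-free languages of finite index. -/
def CFFamFin (T : Type) : Set (Set (List T)) :=
  { L | ∃ m : ℕ, 1 ≤ m ∧ L ∈ CFFamInd T m }

/-- A grammar is linear if every right-hand side contains at most one nonterminal. -/
def CFG.Linear {T : Type} (G : CFG T) : Prop := ∀ r ∈ G.rules, ntCount r.2 ≤ 1

/-- The family `L(LIN)` of linear context-free languages. -/
def LinFam (T : Type) : Set (Set (List T)) :=
  { L | ∃ G : CFG T, G.Linear ∧ EqL G.lang L }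

/-- The family `L(FIN)` of finite languages. -/
def FinFam (T : Type) : Set (Set (List T)) := { L | L.Finite }

/-- A programmed grammar with context-free rules. -/
structure PG (T : Type) where
  start : ℕ
  nLab : ℕ
  rule : Fin nLab → Rule T
  succ : Fin nLab → Set (Fin nLab)
  fail : Fin nLab → Set (Fin nLab)

def PG.LamFree {T : Type} (G : PG T) : Prop := ∀ r : Fin G.nLab, (G.rule r).2 ≠ []

/-- No appearance checking: all failure fields are empty. -/
def PG.NoAC {T : Type} (G : PG T) : Prop := ∀ r : Fin G.nLab, G.fail r = ∅

/-- One step of a programmed grammar on pairs (sentential form, label). -/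
def PG.PStep {T : Type} (G : PG T) (p q : SForm T × Fin G.nLab) : Prop :=
  (∃ u v : SForm T, p.1 = u ++ Sum.inl (G.rule p.2).1 :: v ∧
      q.1 = u ++ (G.rule p.2).2 ++ v ∧ q.2 ∈ G.succ p.2) ∨
  (Sum.inl (G.rule p.2).1 ∉ p.1 ∧ q.1 = p.1 ∧ q.2 ∈ G.fail p.2)

/-- The language generated by a programmed grammar. -/
def PG.lang {T : Type} (G : PG T) : Set (List T) :=
  { w | ∃ r₁ r₂ : Fin G.nLab,
      Relation.ReflTransGen G.PStep ([Sum.inl G.start], r₁) (w.map Sum.inr, r₂) }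

/-- The words of `G.lang` having a derivation of index at most `m`. -/
def PG.langB {T : Type} (G : PG T) (m : ℕ) : Set (List T) :=
  { w | ∃ r₁ r₂ : Fin G.nLab, ntCount ([Sum.inl G.start] : SForm T) ≤ m ∧
      Relation.ReflTransGen (fun p q => G.PStep p q ∧ ntCount q.1 ≤ m)
        ([Sum.inl G.start], r₁) (w.map Sum.inr, r₂) }

/-- The family `L_m(P, CF[−λ][, ac])`: programmed languages of index at most `m`;
`ac = false` forbids appearance checking, `lf = true` forbids erasing rules. -/
def PFamInd (T : Type) (lf ac : Bool) (m : ℕ) : Set (Set (List T)) :=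
  { L | ∃ G : PG T, (lf = true → G.LamFree) ∧ (ac = false → G.NoAC) ∧
      EqL G.lang L ∧ G.lang ⊆ G.langB m }

/-- The family `L_fin(P, CF[−λ][, ac])` of programmed languages of finite index. -/
def PFamFin (T : Type) (lf ac : Bool) : Set (Set (List T)) :=
  { L | ∃ m : ℕ, 1 ≤ m ∧ L ∈ PFamInd T lf ac m }

/-!
If a derivation of a context-free grammar has index at most `m`, then the `m` steps of a turn in
mode `(t ∧ =m)` can be distributed over the at most `m` nonterminals of a sentential form as
countdowns. A component counts all of them down and hands each symbol over to the other component,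
which applies one rule of the grammar and otherwise only relabels; the turn blocks exactly when
everything has been handed over. Erasing rules are avoided by never producing the symbols that
would later be erased.

The inclusion is strict because of `{aⁿbⁿaⁿ | n ≥ 1}`. Mode `(t ∧ =2)` can force two nonterminals
to be rewritten once each per turn, which keeps the blocks in step. In a context-free language, on
the other hand, every long word has a short factor that can be replaced by a shorter word, whereas
`aⁿbⁿaⁿ` is determined by what remains when a short factor is removed.
-/

section Derivations

variable {T : Type} {P : List (Rule T)} {A m n : ℕ} {x x' y y' z : SForm T} {w : List T}

/-- The derivation relation `x ⇒* y` of a rule set. -/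
abbrev Derives (P : List (Rule T)) : SForm T → SForm T → Prop :=
  Relation.ReflTransGen (RStep P)

/-- No left-hand side of `P` occurs in `x`: the condition that mode `t` imposes on the last
sentential form of a component, see `blocked_iff_not_exists_rStep`. -/
def Blocked (P : List (Rule T)) (x : SForm T) : Prop := ∀ r ∈ P, Sum.inl r.1 ∉ x

lemma rStep_singleton_iff : RStep P [Sum.inl A] z ↔ (A, z) ∈ P := by
  constructor
  · rintro ⟨⟨B, t⟩, hr, u, v, hx, rfl⟩
    obtain ⟨rfl, hBv⟩ | ⟨rfl, hnil⟩ := List.singleton_eq_append_iff.1 hx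
    · obtain ⟨rfl, rfl⟩ : A = B ∧ v = [] := by simpa [eq_comm] using hBv
      simpa using hr
    · cases hnil
  · exact fun h ↦ ⟨_, h, [], [], rfl, by simp⟩

lemma rStep_append_iff :
    RStep P (x ++ y) z ↔
      (∃ x', RStep P x x' ∧ x' ++ y = z) ∨ ∃ y', RStep P y y' ∧ x ++ y' = z := by
  constructor
  · rintro ⟨r, hr, u, v, hxy, rfl⟩
    obtain ⟨c, rfl, rfl⟩ | ⟨c, rfl, hc⟩ := List.append_eq_append_iff.1 hxy
    · exact .inr ⟨_, ⟨r, hr, c, v, rfl, rfl⟩, by simp⟩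
    obtain ⟨rfl, rfl⟩ | ⟨c, rfl, rfl⟩ := List.cons_eq_append_iff.1 hc
    · exact .inr ⟨_, ⟨r, hr, [], v, rfl, rfl⟩, by simp⟩
    · exact .inl ⟨_, ⟨r, hr, u, c, rfl, rfl⟩, by simp⟩
  · rintro (⟨_, ⟨r, hr, u, v, rfl, rfl⟩, rfl⟩ | ⟨_, ⟨r, hr, u, v, rfl, rfl⟩, rfl⟩)
    · exact ⟨r, hr, u, v ++ y, by simp, by simp⟩
    · exact ⟨r, hr, x ++ u, v, by simp, by simp⟩

lemma blocked_iff_not_exists_rStep : Blocked P x ↔ ¬ ∃ y, RStep P x y := by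
  constructor
  · rintro h ⟨y, r, hr, u, v, rfl, -⟩
    exact h r hr (by simp)
  · intro h r hr hx
    obtain ⟨u, v, rfl⟩ := List.append_of_mem hx
    exact h ⟨_, r, hr, u, v, rfl, rfl⟩

lemma blocked_map_inr (w : List T) : Blocked P (w.map Sum.inr) := by
  simp [Blocked]

lemma Blocked.stepsN_iff (h : Blocked P x) : StepsN P n x z ↔ n = 0 ∧ x = z := by
  cases n with
  | zero => simp [StepsN]
  | succ n =>
    have hx := blocked_iff_not_exists_rStep.1 h
    simp only [StepsN, Nat.add_one_ne_zero, false_and, iff_false]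
    exact fun ⟨y, hxy, _⟩ ↦ hx ⟨y, hxy⟩

lemma StepsN.trans (h : StepsN P m x y) (h' : StepsN P n y z) : StepsN P (m + n) x z := by
  induction m generalizing x with
  | zero => cases h; simpa using h'
  | succ m ih =>
    obtain ⟨a, hxa, hay⟩ := h
    rw [Nat.add_right_comm]
    exact ⟨a, hxa, ih hay⟩

lemma StepsN.append (h : StepsN P m x x') (h' : StepsN P n y y') :
    StepsN P (m + n) (x ++ y) (x' ++ y') := by
  have left : StepsN P m (x ++ y) (x' ++ y) := by
    induction m generalizing x with
    | zero => cases h; rfl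
    | succ m ih =>
      obtain ⟨a, hxa, hax'⟩ := h
      exact ⟨a ++ y, rStep_append_iff.2 (.inl ⟨a, hxa, rfl⟩), ih hax'⟩
  have right : StepsN P n (x' ++ y) (x' ++ y') := by
    clear left
    induction n generalizing y with
    | zero => cases h'; rfl
    | succ n ih =>
      obtain ⟨a, hya, hay'⟩ := h'
      exact ⟨x' ++ a, rStep_append_iff.2 (.inr ⟨a, hya, rfl⟩), ih hay'⟩
  exact left.trans right

lemma stepsN_append_iff :
    StepsN P n (x ++ y) z ↔
      ∃ i j x' y', i + j = n ∧ x' ++ y' = z ∧ StepsN P i x x' ∧ StepsN P j y y' := by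
  refine ⟨fun h ↦ ?_, fun ⟨i, j, x', y', hij, hz, hx, hy⟩ ↦ hij ▸ hz ▸ hx.append hy⟩
  induction n generalizing x y with
  | zero => exact ⟨0, 0, x, y, rfl, h, rfl, rfl⟩
  | succ n ih =>
    obtain ⟨s, hs, hsz⟩ := h
    obtain ⟨a, hxa, rfl⟩ | ⟨a, hya, rfl⟩ := rStep_append_iff.1 hs
    · obtain ⟨i, j, x', y', rfl, rfl, hax', hyy'⟩ := ih hsz
      exact ⟨i + 1, j, x', y', by omega, rfl, ⟨a, hxa, hax'⟩, hyy'⟩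
    · obtain ⟨i, j, x', y', rfl, rfl, hxx', hay'⟩ := ih hsz
      exact ⟨i, j + 1, x', y', by omega, rfl, hxx', ⟨a, hya, hay'⟩⟩

lemma stepsN_singleton_iff_of_blocked (h : ∀ z, (A, z) ∈ P → Blocked P z) :
    StepsN P n [Sum.inl A] z ↔ n = 0 ∧ [Sum.inl A] = z ∨ n = 1 ∧ (A, z) ∈ P := by
  cases n with
  | zero => simp [StepsN]
  | succ n =>
    simp only [StepsN, rStep_singleton_iff, Nat.add_one_ne_zero, false_and, false_or,
      Nat.add_eq_right]
    constructor
    · rintro ⟨y, hy, hyz⟩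
      obtain ⟨rfl, rfl⟩ := (h y hy).stepsN_iff.1 hyz
      exact ⟨rfl, hy⟩
    · rintro ⟨rfl, hz⟩
      exact ⟨z, hz, rfl⟩

lemma derives_iff_exists_stepsN : Derives P x y ↔ ∃ n, StepsN P n x y := by
  constructor
  · intro h
    induction h using Relation.ReflTransGen.head_induction_on with
    | refl => exact ⟨0, rfl⟩
    | head hxa _ ih =>
      obtain ⟨n, hn⟩ := ih
      exact ⟨n + 1, _, hxa, hn⟩
  · rintro ⟨n, hn⟩
    induction n generalizing x with
    | zero => cases hn; exact .refl
    | succ n ih =>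
      obtain ⟨a, hxa, hay⟩ := hn
      exact .head hxa (ih hay)

lemma Derives.append (h : Derives P x x') (h' : Derives P y y') :
    Derives P (x ++ y) (x' ++ y') := by
  obtain ⟨m, hm⟩ := derives_iff_exists_stepsN.1 h
  obtain ⟨n, hn⟩ := derives_iff_exists_stepsN.1 h'
  exact derives_iff_exists_stepsN.2 ⟨m + n, hm.append hn⟩

lemma Blocked.eq_of_derives (h : Blocked P x) (h' : Derives P x y) : x = y := by
  obtain ⟨n, hn⟩ := derives_iff_exists_stepsN.1 h'
  exact (h.stepsN_iff.1 hn).2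

lemma Derives.of_mem {r : Rule T} (h : r ∈ P) : Derives P [Sum.inl r.1] r.2 :=
  .single (rStep_singleton_iff.2 h)

lemma Derives.exists_rule (h : Derives P x (w.map Sum.inr)) (hA : Sum.inl A ∈ x) :
    ∃ r ∈ P, r.1 = A := by
  induction h using Relation.ReflTransGen.head_induction_on with
  | refl => simp at hA
  | head hstep _ ih =>
    obtain ⟨r, hr, u, v, rfl, rfl⟩ := hstep
    obtain hu | hr' | hv : Sum.inl A ∈ u ∨ A = r.1 ∨ Sum.inl A ∈ v := by simpa using hA
    · exact ih (by simp [hu])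
    · exact ⟨r, hr, hr'.symm⟩
    · exact ih (by simp [hv])

lemma CDGS.modeStep_t_eq_iff {G : CDGS T} :
    G.ModeStep (.conj .t (.eq m)) x y ↔
      ∃ i, StepsN (G.comp i) m x y ∧ Blocked (G.comp i) y := by
  simp only [CDGS.ModeStep, modeOK, blocked_iff_not_exists_rStep]
  constructor
  · rintro ⟨i, _, h, ht, rfl⟩
    exact ⟨i, h, ht⟩
  · rintro ⟨i, h, ht⟩
    exact ⟨i, m, h, ht, rfl⟩

end Derivations

section LambdaElimination

variable {T : Type} {P : List (Rule T)} {m : ℕ} {x x' y y' z : SForm T} {w : List T}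

/-- `ErasesTo P x y` holds if `y` is obtained from `x` by deleting some occurrences of symbols
that derive the empty word. -/
inductive ErasesTo (P : List (Rule T)) : SForm T → SForm T → Prop
  | nil : ErasesTo P [] []
  | keep (s : Symb T) {x y : SForm T} : ErasesTo P x y → ErasesTo P (s :: x) (s :: y)
  | drop {s : Symb T} {x y : SForm T} :
      Derives P [s] [] → ErasesTo P x y → ErasesTo P (s :: x) y

namespace ErasesTo

lemma refl (x : SForm T) : ErasesTo P x x := by
  induction x with
  | nil => exact .nil
  | cons s x ih => exact .keep s ih

lemma derives (h : ErasesTo P x y) : Derives P x y := by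
  induction h with
  | nil => exact .refl
  | keep s _ ih => exact Derives.append (x := [s]) .refl ih
  | drop hs _ ih => exact Derives.append hs ih

lemma sublist (h : ErasesTo P x y) : y.Sublist x := by
  induction h with
  | nil => exact .slnil
  | keep s _ ih => exact ih.cons_cons s
  | drop _ _ ih => exact ih.cons _

lemma append (h : ErasesTo P x x') (h' : ErasesTo P y y') :
    ErasesTo P (x ++ y) (x' ++ y') := by
  induction h with
  | nil => exact h'
  | keep s _ ih => exact .keep s ih
  | drop hs _ ih => exact .drop hs ih

lemma exists_append (h : ErasesTo P (x ++ y) z) :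
    ∃ x' y', z = x' ++ y' ∧ ErasesTo P x x' ∧ ErasesTo P y y' := by
  induction x generalizing z with
  | nil => exact ⟨[], z, rfl, .nil, h⟩
  | cons s x ih =>
    cases h with
    | keep _ h =>
      obtain ⟨x', y', rfl, hx, hy⟩ := ih h
      exact ⟨s :: x', y', rfl, .keep s hx, hy⟩
    | drop hs h =>
      obtain ⟨x', y', rfl, hx, hy⟩ := ih h
      exact ⟨x', y', rfl, .drop hs hx, hy⟩

end ErasesTo

open Classical in
/-- The λ-free rules `A → z` for which some `A → z'` in `P` becomes `A → z` by deleting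
nullable symbols from `z'`. -/
noncomputable def lambdaFreeRules (P : List (Rule T)) : List (Rule T) :=
  P.flatMap fun r ↦
    (r.2.sublists.filter fun z ↦ decide (z ≠ [] ∧ ErasesTo P r.2 z)).map (r.1, ·)

lemma mem_lambdaFreeRules {s : Rule T} :
    s ∈ lambdaFreeRules P ↔ ∃ r ∈ P, r.1 = s.1 ∧ s.2 ≠ [] ∧ ErasesTo P r.2 s.2 := by
  simp only [lambdaFreeRules, List.mem_flatMap, List.mem_map, List.mem_filter,
    List.mem_sublists, decide_eq_true_eq]
  constructor
  · rintro ⟨r, hr, z, ⟨-, hz, hrz⟩, rfl⟩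
    exact ⟨r, hr, rfl, hz, hrz⟩
  · rintro ⟨r, hr, hrs, hz, hrz⟩
    exact ⟨r, hr, s.2, ⟨hrz.sublist, hz, hrz⟩, by rw [hrs]⟩

lemma Derives.of_lambdaFreeRules (h : Derives (lambdaFreeRules P) x y) : Derives P x y := by
  refine Relation.ReflTransGen.lift' id ?_ _ _ h
  rintro _ _ ⟨s, hs, u, v, rfl, rfl⟩
  obtain ⟨r, hr, hrs, -, hz⟩ := mem_lambdaFreeRules.1 hs
  have hder : Derives P [Sum.inl s.1] s.2 := hrs ▸ (Derives.of_mem hr).trans hz.derives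
  change Derives P (u ++ Sum.inl s.1 :: v) (u ++ s.2 ++ v)
  simpa using (Derives.append .refl hder).append (.refl (a := v))

/-- A derivation of bounded index survives the elimination of erasing rules: instead of erasing
a nullable symbol later, do not produce it at all. -/
lemma exists_erasesTo_derivation_lambdaFreeRules
    (h : Relation.ReflTransGen (fun x y ↦ RStep P x y ∧ ntCount y ≤ m) x (w.map Sum.inr)) :
    ∃ x', ErasesTo P x x' ∧ Relation.ReflTransGen
      (fun x y ↦ RStep (lambdaFreeRules P) x y ∧ ntCount y ≤ m) x' (w.map Sum.inr) := by
  induction h using Relation.ReflTransGen.head_induction_on with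
  | refl => exact ⟨_, .refl _, .refl⟩
  | head hstep _ ih =>
    obtain ⟨⟨r, hr, u, v, rfl, rfl⟩, hindex⟩ := hstep
    obtain ⟨y', hy, hder⟩ := ih
    have hindex' : ntCount y' ≤ m := (hy.sublist.filter _).length_le.trans hindex
    obtain ⟨_, v', rfl, huz, hv⟩ := hy.exists_append
    obtain ⟨u', z', rfl, hu, hz⟩ := huz.exists_append
    by_cases hz' : z' = []
    · subst hz'
      have hnull : Derives P [Sum.inl r.1] [] := (Derives.of_mem hr).trans hz.derives
      exact ⟨u' ++ v', hu.append (.drop hnull hv), by simpa using hder⟩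
    · have hmem : (r.1, z') ∈ lambdaFreeRules P :=
        mem_lambdaFreeRules.2 ⟨r, hr, rfl, hz', hz⟩
      exact ⟨u' ++ Sum.inl r.1 :: v', hu.append (.keep _ hv),
        .head ⟨⟨_, hmem, u', v', rfl, rfl⟩, hindex'⟩ hder⟩

lemma ne_nil_of_derives (hP : ∀ r ∈ P, r.2 ≠ []) (h : Derives P x y) (hx : x ≠ []) :
    y ≠ [] := by
  induction h with
  | refl => exact hx
  | tail _ hstep _ =>
    obtain ⟨r, hr, u, v, rfl, rfl⟩ := hstep
    simp [hP r hr]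

namespace CFG

lemma langB_subset_lang (G : CFG T) (m : ℕ) : G.langB m ⊆ G.lang :=
  fun _ hw ↦ Relation.ReflTransGen.mono (fun _ _ h ↦ h.1) _ _ hw.2

/-- The λ-free grammar that generates the nonempty words of the language of `G`. -/
noncomputable def lambdaFree (G : CFG T) : CFG T := ⟨G.start, lambdaFreeRules G.rules⟩

lemma lambdaFree_rules_ne_nil (G : CFG T) : ∀ r ∈ G.lambdaFree.rules, r.2 ≠ [] :=
  fun _ hr ↦ (mem_lambdaFreeRules.1 hr).elim fun _ h ↦ h.2.2.1

lemma lang_lambdaFree_subset (G : CFG T) : G.lambdaFree.lang ⊆ G.lang \ {[]} := by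
  refine fun w hw ↦ ⟨Derives.of_lambdaFreeRules hw, ?_⟩
  rintro rfl
  exact ne_nil_of_derives G.lambdaFree_rules_ne_nil hw (List.cons_ne_nil _ _) rfl

lemma langB_diff_subset_langB_lambdaFree (G : CFG T) (m : ℕ) :
    G.langB m \ {[]} ⊆ G.lambdaFree.langB m := by
  rintro w ⟨⟨hm, hder⟩, hw⟩
  obtain ⟨x', hx', hder'⟩ := exists_erasesTo_derivation_lambdaFreeRules hder
  refine ⟨hm, ?_⟩
  cases hx' with
  | keep _ h => cases h; exact hder'
  | drop _ h =>
    cases h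
    have hnil : Derives (lambdaFreeRules G.rules) [] (w.map Sum.inr) :=
      Relation.ReflTransGen.mono (fun _ _ h ↦ h.1) _ _ hder'
    exact absurd (by simpa using (blocked_map_inr []).eq_of_derives hnil) hw

end CFG

theorem exists_lambdaFree_of_mem_CFFamInd {L : Set (List T)} (hL : L ∈ CFFamInd T m) :
    ∃ G : CFG T, (∀ r ∈ G.rules, r.2 ≠ []) ∧ EqL G.lang L ∧ G.lang ⊆ G.langB m := by
  obtain ⟨G, hGL, hGm⟩ := hL
  have complete : G.lang \ {[]} ⊆ G.lambdaFree.langB m :=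
    (Set.sdiff_subset_sdiff_left hGm).trans (G.langB_diff_subset_langB_lambdaFree m)
  refine ⟨G.lambdaFree, G.lambdaFree_rules_ne_nil, Eq.trans ?_ hGL,
    G.lang_lambdaFree_subset.trans complete⟩
  ext w
  exact ⟨fun h ↦ G.lang_lambdaFree_subset h.1,
    fun h ↦ ⟨G.lambdaFree.langB_subset_lang m (complete h), h.2⟩⟩

end LambdaElimination

section TwoPhaseSimulation

variable {T : Type} {P : List (Rule T)} {m p q A : ℕ} {x y z X Y : SForm T} {w : List T}

/-- The copy of the nonterminal `A` with countdown `c` that is rewritten by component `p`. -/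
def phaseNT (A c p : ℕ) : ℕ := Nat.pair A (Nat.pair c p)

/-- Forgets the countdown and the component of a copy `phaseNT A c p`. -/
def strip : Symb T → Symb T := Sum.map (fun n ↦ n.unpair.1) id

/-- The number of steps its component spends on a symbol: a copy `phaseNT A c p` is counted
down `c` times before it is handed over. -/
def cost : Symb T → ℕ := Sum.elim (fun n ↦ n.unpair.2.unpair.1 + 1) fun _ ↦ 0

@[simp]
lemma strip_phaseNT {c : ℕ} : strip (Sum.inl (phaseNT A c p) : Symb T) = Sum.inl A := by
  simp [strip, phaseNT]

@[simp]
lemma strip_inr {a : T} : strip (Sum.inr a) = Sum.inr a := rfl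

@[simp]
lemma cost_phaseNT {c : ℕ} : cost (Sum.inl (phaseNT A c p) : Symb T) = c + 1 := by
  simp [cost, phaseNT]

@[simp]
lemma cost_inr {a : T} : cost (Sum.inr a) = 0 := rfl

@[simp]
lemma ntCount_inl_cons : ntCount (Sum.inl A :: x) = ntCount x + 1 := rfl

@[simp]
lemma ntCount_inr_cons {a : T} : ntCount (Sum.inr a :: x) = ntCount x := rfl

/-- The copies of a symbol for component `p` with countdown less than `m`. -/
def copies (m p : ℕ) : Symb T → List (Symb T)
  | .inl A => (List.range m).map fun c ↦ Sum.inl (phaseNT A c p)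
  | .inr a => [Sum.inr a]

/-- The sentential forms that arise from a form by replacing each symbol by one of its
`copies`. -/
def labelings (m p : ℕ) (x : SForm T) : List (SForm T) := (x.map (copies m p)).sections

/-- The rules of component `p` simulating `P`: count a copy down, and at countdown `0` hand it
over to component `q`, either after applying a rule of `P` or unchanged. -/
def phaseRules (P : List (Rule T)) (m p q : ℕ) : List (Rule T) := P.flatMap fun r ↦
  ((List.range m).map fun c ↦ (phaseNT r.1 (c + 1) p, [Sum.inl (phaseNT r.1 c p)])) ++
  (labelings m q r.2 ++ labelings m q [Sum.inl r.1]).map (phaseNT r.1 0 p, ·)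

lemma mem_phaseRules {s : Rule T} :
    s ∈ phaseRules P m p q ↔ ∃ r ∈ P,
      (∃ c < m, (phaseNT r.1 (c + 1) p, [Sum.inl (phaseNT r.1 c p)]) = s) ∨
      ∃ z, (z ∈ labelings m q r.2 ∨ z ∈ labelings m q [Sum.inl r.1]) ∧
        (phaseNT r.1 0 p, z) = s := by
  simp only [phaseRules, List.mem_flatMap, List.mem_append, List.mem_map, List.mem_range]

@[simp]
lemma mem_labelings_nil : X ∈ labelings m p ([] : SForm T) ↔ X = [] := by
  simp [labelings]

@[simp]
lemma mem_labelings_inl_cons :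
    X ∈ labelings m p (Sum.inl A :: x) ↔
      ∃ c < m, ∃ Y ∈ labelings m p x, X = Sum.inl (phaseNT A c p) :: Y := by
  simp only [labelings, copies, List.mem_sections, List.map_cons, List.forall₂_cons_right_iff,
    List.mem_map, List.mem_range]
  aesop

@[simp]
lemma mem_labelings_inr_cons {a : T} :
    X ∈ labelings m p (Sum.inr a :: x) ↔ ∃ Y ∈ labelings m p x, X = Sum.inr a :: Y := by
  simp only [labelings, copies, List.mem_sections, List.map_cons, List.forall₂_cons_right_iff,
    List.mem_singleton]
  aesop

lemma mem_labelings_append :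
    X ∈ labelings m p (x ++ y) ↔
      ∃ Y ∈ labelings m p x, ∃ Z ∈ labelings m p y, X = Y ++ Z := by
  induction x generalizing X with
  | nil => simp
  | cons s x ih =>
    cases s <;> simp only [List.cons_append, mem_labelings_inl_cons, mem_labelings_inr_cons, ih]
      <;> aesop

lemma map_strip_of_mem_labelings (h : X ∈ labelings m p x) : X.map strip = x := by
  induction x generalizing X with
  | nil => simpa using h
  | cons s x ih =>
    cases s with
    | inl A =>
      obtain ⟨c, -, Y, hY, rfl⟩ := mem_labelings_inl_cons.1 h
      simp [ih hY]
    | inr a =>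
      obtain ⟨Y, hY, rfl⟩ := mem_labelings_inr_cons.1 h
      simp [ih hY]

lemma phase_eq_of_mem_labelings {n : ℕ} (h : X ∈ labelings m p x) (hn : Sum.inl n ∈ X) :
    n.unpair.2.unpair.2 = p := by
  induction x generalizing X with
  | nil => simp_all
  | cons s x ih =>
    cases s with
    | inl A =>
      obtain ⟨c, -, Y, hY, rfl⟩ := mem_labelings_inl_cons.1 h
      obtain rfl | hn : n = phaseNT A c p ∨ Sum.inl n ∈ Y := by simpa using hn
      · simp [phaseNT]
      · exact ih hY hn
    | inr a =>
      obtain ⟨Y, hY, rfl⟩ := mem_labelings_inr_cons.1 h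
      exact ih hY (by simpa using hn)

lemma map_inr_mem_labelings (w : List T) : w.map Sum.inr ∈ labelings m p (w.map Sum.inr) := by
  induction w with
  | nil => simp
  | cons a w ih => simpa using ih

lemma eq_of_mem_labelings_map_inr (h : X ∈ labelings m p (w.map Sum.inr)) :
    X = w.map Sum.inr := by
  induction w generalizing X with
  | nil => simpa using h
  | cons a w ih =>
    obtain ⟨Y, hY, rfl⟩ := mem_labelings_inr_cons.1 h
    rw [ih hY, List.map_cons]

lemma exists_labeling_cost_eq_ntCount (hm : 0 < m) (x : SForm T) :
    ∃ X ∈ labelings m p x, (X.map cost).sum = ntCount x := by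
  induction x with
  | nil => exact ⟨[], by simp, rfl⟩
  | cons s x ih =>
    obtain ⟨X, hX, hcost⟩ := ih
    cases s with
    | inl A =>
      refine ⟨_, mem_labelings_inl_cons.2 ⟨0, hm, X, hX, rfl⟩, ?_⟩
      simp [hcost, add_comm]
    | inr a =>
      refine ⟨_, mem_labelings_inr_cons.2 ⟨X, hX, rfl⟩, ?_⟩
      simpa using hcost

/-- The first nonterminal absorbs the steps that the others do not need. -/
lemma exists_labeling_cost_eq (h0 : ntCount x ≠ 0) (hm : ntCount x ≤ m) :
    ∃ X ∈ labelings m p x, (X.map cost).sum = m := by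
  induction x with
  | nil => exact absurd rfl h0
  | cons s x ih =>
    cases s with
    | inl A =>
      have hcount : ntCount (Sum.inl A :: x) = ntCount x + 1 := rfl
      obtain ⟨X, hX, hcost⟩ := exists_labeling_cost_eq_ntCount (m := m) (p := p) (by omega) x
      refine ⟨_, mem_labelings_inl_cons.2 ⟨m - 1 - ntCount x, by omega, X, hX, rfl⟩, ?_⟩
      simp only [List.map_cons, List.sum_cons, hcost, cost_phaseNT]
      omega
    | inr a =>
      obtain ⟨X, hX, hcost⟩ := ih h0 hm
      exact ⟨_, mem_labelings_inr_cons.2 ⟨X, hX, rfl⟩, by simpa using hcost⟩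

lemma blocked_phaseRules (hpq : p ≠ q) (hX : X ∈ labelings m q x) :
    Blocked (phaseRules P m p q) X := by
  intro s hs hmem
  have hq := phase_eq_of_mem_labelings hX hmem
  obtain ⟨r, -, ⟨c, -, rfl⟩ | ⟨z, -, rfl⟩⟩ := mem_phaseRules.1 hs <;>
    exact hpq (by simpa [phaseNT] using hq)

lemma ne_nil_of_mem_phaseRules (hP : ∀ r ∈ P, r.2 ≠ []) {s : Rule T}
    (hs : s ∈ phaseRules P m p q) : s.2 ≠ [] := by
  obtain ⟨r, hr, ⟨c, -, rfl⟩ | ⟨z, hz, rfl⟩⟩ := mem_phaseRules.1 hs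
  · simp
  · rintro rfl
    obtain hz | hz := hz
    · exact hP r hr (map_strip_of_mem_labelings hz).symm
    · simp at hz

lemma derives_map_strip_of_mem_phaseRules {s : Rule T} (hs : s ∈ phaseRules P m p q) :
    Derives P [strip (Sum.inl s.1)] (s.2.map strip) := by
  obtain ⟨r, hr, ⟨c, -, rfl⟩ | ⟨z, hz | hz, rfl⟩⟩ := mem_phaseRules.1 hs
  · simp [Relation.ReflTransGen.refl]
  · simpa [map_strip_of_mem_labelings hz] using Derives.of_mem hr
  · simp [map_strip_of_mem_labelings hz, Relation.ReflTransGen.refl]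

lemma StepsN.derives_map_strip {n : ℕ} (h : StepsN (phaseRules P m p q) n X Y) :
    Derives P (X.map strip) (Y.map strip) := by
  refine Relation.ReflTransGen.lift' (List.map strip) ?_ _ _ (derives_iff_exists_stepsN.2 ⟨n, h⟩)
  rintro _ _ ⟨s, hs, u, v, rfl, rfl⟩
  change Derives P ((u ++ Sum.inl s.1 :: v).map strip) ((u ++ s.2 ++ v).map strip)
  simpa using (Derives.append .refl (derives_map_strip_of_mem_phaseRules hs)).append
    (.refl (a := v.map strip))

lemma stepsN_phaseNT {r : Rule T} {c : ℕ} (hr : r ∈ P) (hc : c < m)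
    (hz : z ∈ labelings m q r.2 ∨ z ∈ labelings m q [Sum.inl r.1]) :
    StepsN (phaseRules P m p q) (c + 1) [Sum.inl (phaseNT r.1 c p)] z := by
  induction c with
  | zero =>
    exact ⟨z, rStep_singleton_iff.2 (mem_phaseRules.2 ⟨r, hr, .inr ⟨z, hz, rfl⟩⟩), rfl⟩
  | succ c ih =>
    exact ⟨_, rStep_singleton_iff.2 (mem_phaseRules.2 ⟨r, hr, .inl ⟨c, by omega, rfl⟩⟩),
      ih (by omega)⟩

lemma stepsN_phaseRules_of_mem_labelings (hx : ∀ A, Sum.inl A ∈ x → ∃ r ∈ P, r.1 = A)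
    (hX : X ∈ labelings m p x) (hY : Y ∈ labelings m q x) :
    StepsN (phaseRules P m p q) (X.map cost).sum X Y := by
  induction x generalizing X Y with
  | nil =>
    obtain rfl := mem_labelings_nil.1 hX
    exact (mem_labelings_nil.1 hY).symm
  | cons s x ih =>
    have hx' : ∀ A, Sum.inl A ∈ x → ∃ r ∈ P, r.1 = A :=
      fun A hA ↦ hx A (List.mem_cons_of_mem s hA)
    cases s with
    | inl A =>
      obtain ⟨r, hr, rfl⟩ := hx A List.mem_cons_self
      obtain ⟨c, hc, X', hX', rfl⟩ := mem_labelings_inl_cons.1 hX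
      obtain ⟨d, hd, Y', hY', rfl⟩ := mem_labelings_inl_cons.1 hY
      have hhead : [Sum.inl (phaseNT r.1 d q)] ∈ labelings (T := T) m q [Sum.inl r.1] := by
        simpa using ⟨d, hd, rfl⟩
      simpa using (stepsN_phaseNT hr hc (.inr hhead)).append (ih hx' hX' hY')
    | inr a =>
      obtain ⟨X', hX', rfl⟩ := mem_labelings_inr_cons.1 hX
      obtain ⟨Y', hY', rfl⟩ := mem_labelings_inr_cons.1 hY
      have hhead : StepsN (phaseRules P m p q) 0 [Sum.inr a] [Sum.inr a] := rfl
      simpa using hhead.append (ih hx' hX' hY')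

lemma stepsN_phaseRules_of_rStep (hy : Derives P y (w.map Sum.inr)) (hxy : RStep P x y)
    (hX : X ∈ labelings m p x) (hY : Y ∈ labelings m q y) :
    StepsN (phaseRules P m p q) (X.map cost).sum X Y := by
  obtain ⟨r, hr, u, v, rfl, rfl⟩ := hxy
  obtain ⟨Xu, hXu, _, hXAv, rfl⟩ := mem_labelings_append.1 hX
  obtain ⟨c, hc, Xv, hXv, rfl⟩ := mem_labelings_inl_cons.1 hXAv
  obtain ⟨_, hYuz, Yv, hYv, rfl⟩ := mem_labelings_append.1 hY
  obtain ⟨Yu, hYu, Yz, hYz, rfl⟩ := mem_labelings_append.1 hYuz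
  have hu := stepsN_phaseRules_of_mem_labelings (fun A hA ↦ hy.exists_rule (by simp [hA])) hXu hYu
  have hv := stepsN_phaseRules_of_mem_labelings (fun A hA ↦ hy.exists_rule (by simp [hA])) hXv hYv
  have hr := stepsN_phaseNT (p := p) hr hc (.inl hYz)
  simpa [add_assoc] using hu.append (hr.append hv)

/-- The two-component system in which components `0` and `1` simulate `G` in turns, each turn
taking exactly `m` steps. -/
def phaseSystem (G : CFG T) (m : ℕ) : CDGS T where
  deg := 2
  start := phaseNT G.start (m - 1) 0
  comp (i : Fin 2) := phaseRules G.rules m i ↑(1 - i)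

lemma phaseSystem_modeStep_iff {G : CFG T} :
    (phaseSystem G m).ModeStep (.conj .t (.eq m)) X Y ↔
      ∃ i : Fin 2, StepsN (phaseRules G.rules m i ↑(1 - i)) m X Y ∧
        Blocked (phaseRules G.rules m i ↑(1 - i)) Y :=
  CDGS.modeStep_t_eq_iff

lemma phaseSystem_derives {G : CFG T} {i : Fin 2} (hm : 0 < m)
    (h : Relation.ReflTransGen (fun x y ↦ RStep G.rules x y ∧ ntCount y ≤ m) x (w.map Sum.inr))
    (hX : X ∈ labelings m i x) (hcost : ntCount x ≠ 0 → (X.map cost).sum = m) :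
    Relation.ReflTransGen ((phaseSystem G m).ModeStep (.conj .t (.eq m))) X (w.map Sum.inr) := by
  induction h using Relation.ReflTransGen.head_induction_on generalizing i X with
  | refl => rw [eq_of_mem_labelings_map_inr hX]
  | @head x y hxy hyw ih =>
    obtain ⟨hstep, hindex⟩ := hxy
    have hx : ntCount x ≠ 0 := by
      obtain ⟨r, -, u, v, rfl, -⟩ := hstep
      simp [ntCount]
    obtain ⟨Y, hY, hYcost⟩ : ∃ Y ∈ labelings m (1 - i : Fin 2) y,
        ntCount y ≠ 0 → (Y.map cost).sum = m := by
      by_cases hy : ntCount y = 0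
      · obtain ⟨Y, hY, -⟩ := exists_labeling_cost_eq_ntCount hm y
        exact ⟨Y, hY, absurd hy⟩
      · obtain ⟨Y, hY, hYcost⟩ := exists_labeling_cost_eq hy hindex
        exact ⟨Y, hY, fun _ ↦ hYcost⟩
    have hyw' : Derives G.rules y (w.map Sum.inr) :=
      Relation.ReflTransGen.mono (fun _ _ h ↦ h.1) _ _ hyw
    have hsteps := stepsN_phaseRules_of_rStep hyw' hstep hX hY
    rw [hcost hx] at hsteps
    have hphase : (i : ℕ) ≠ (1 - i : Fin 2) := by fin_cases i <;> simp
    exact .head (phaseSystem_modeStep_iff.2 ⟨i, hsteps, blocked_phaseRules hphase hY⟩)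
      (ih hY hYcost)

theorem lang_phaseSystem {G : CFG T} (hm : 0 < m) (hG : G.lang ⊆ G.langB m) :
    (phaseSystem G m).lang (.conj .t (.eq m)) = G.lang := by
  ext w
  constructor
  · intro hw
    have hder := Relation.ReflTransGen.lift' (List.map strip)
      (fun X Y h ↦ (phaseSystem_modeStep_iff.1 h).elim fun _ h ↦ h.1.derives_map_strip) _ _
      hw.to_reflTransGen
    have hw' : (w.map Sum.inr : SForm T).map strip = w.map Sum.inr :=
      map_strip_of_mem_labelings (map_inr_mem_labelings (m := m) (p := 0) w)
    simpa [CFG.lang, phaseSystem, hw', Function.onFun] using hder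
  · intro hw
    have hstart : [Sum.inl (phaseNT G.start (m - 1) 0)] ∈
        labelings (T := T) m (0 : Fin 2) [Sum.inl G.start] := by
      simpa using ⟨m - 1, Nat.sub_lt hm Nat.one_pos, rfl⟩
    have hder := phaseSystem_derives hm (hG hw).2 hstart fun _ ↦ by
      simpa using Nat.sub_add_cancel hm
    obtain heq | hder := Relation.reflTransGen_iff_eq_or_transGen.1 hder
    · cases w <;> simp at heq
    · exact hder

theorem exists_mem_CDFam_two_of_mem_CFFamFin {L : Set (List T)} (lf : Bool) (hL : L ∈ CFFamFin T) :
    ∃ k, 1 ≤ k ∧ L ∈ CDFam T lf 2 (.conj .t (.eq k)) := by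
  obtain ⟨m, hm, hL⟩ := hL
  obtain ⟨G, hlf, hGL, hGm⟩ := exists_lambdaFree_of_mem_CFFamInd hL
  refine ⟨m, hm, phaseSystem G m, le_rfl, fun _ _ _ ↦ ne_nil_of_mem_phaseRules hlf, ?_⟩
  rwa [lang_phaseSystem hm hGm]

end TwoPhaseSimulation

section Shrinking

variable {T : Type} {P : List (Rule T)} {C l : ℕ} {x y : SForm T} {u v w : List T}

/-- `ShortYield P l x w` holds if `w` is obtained from `x` by replacing each symbol by a
terminal word of length at most `l` derived from it. -/
inductive ShortYield (P : List (Rule T)) (l : ℕ) : SForm T → List T → Prop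
  | nil : ShortYield P l [] []
  | cons {s : Symb T} {x : SForm T} {v w : List T} :
      Derives P [s] (v.map Sum.inr) → v.length ≤ l → ShortYield P l x w →
        ShortYield P l (s :: x) (v ++ w)

namespace ShortYield

lemma map_inr (hl : 1 ≤ l) (w : List T) : ShortYield P l (w.map Sum.inr) w := by
  induction w with
  | nil => exact .nil
  | cons a w ih => exact .cons (v := [a]) .refl hl ih

lemma derives (h : ShortYield P l x w) : Derives P x (w.map Sum.inr) := by
  induction h with
  | nil => exact .refl
  | cons hs _ _ ih => simpa using Derives.append hs ih

lemma length_le (h : ShortYield P l x w) : w.length ≤ x.length * l := by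
  induction h with
  | nil => simp
  | cons _ hv _ ih =>
    rw [List.length_append, List.length_cons, Nat.succ_mul]
    omega

lemma append (hx : ShortYield P l x u) (hy : ShortYield P l y v) :
    ShortYield P l (x ++ y) (u ++ v) := by
  induction hx with
  | nil => exact hy
  | cons hs hv _ ih => simpa using ShortYield.cons hs hv ih

lemma exists_append (h : ShortYield P l (x ++ y) w) :
    ∃ u v, w = u ++ v ∧ ShortYield P l x u ∧ ShortYield P l y v := by
  induction x generalizing w with
  | nil => exact ⟨[], w, rfl, .nil, h⟩
  | cons s x ih =>
    obtain @⟨_⟩ | ⟨hs, hv, h⟩ := h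
    obtain ⟨u, v, rfl, hu, hv'⟩ := ih h
    exact ⟨_, v, (List.append_assoc ..).symm, .cons hs hv hu, hv'⟩

end ShortYield

/-- Look at the last place of a derivation where a symbol derives a long word: the right-hand
side of the rule applied there yields only short words, so that the long word is itself of
bounded length, and the shortest word derivable from the symbol can replace it. -/
lemma shortYield_or_exists_shrinkable_factor (hl : 1 ≤ l) (hC : ∀ r ∈ P, r.2.length ≤ C)
    (hshort : ∀ r ∈ P, ∀ w : List T, Derives P [Sum.inl r.1] (w.map Sum.inr) →
      ∃ w' : List T, Derives P [Sum.inl r.1] (w'.map Sum.inr) ∧ w'.length ≤ l)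
    (h : Derives P x (w.map Sum.inr)) :
    ShortYield P l x w ∨ ∃ u y v y' : List T, w = u ++ y ++ v ∧ y.length ≤ C * l ∧
      y'.length < y.length ∧ Derives P x ((u ++ y' ++ v).map Sum.inr) := by
  induction h using Relation.ReflTransGen.head_induction_on with
  | refl => exact .inl (.map_inr hl w)
  | head hstep _ ih =>
    obtain hyield | ⟨u, y, v, y', hw, hy, hy', hder⟩ := ih
    · obtain ⟨r, hr, α, β, rfl, rfl⟩ := hstep
      obtain ⟨_, v, rfl, hαz, hβ⟩ := hyield.exists_append
      obtain ⟨u, y, rfl, hα, hz⟩ := hαz.exists_append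
      have hr' : Derives P [Sum.inl r.1] (y.map Sum.inr) := (Derives.of_mem hr).trans hz.derives
      by_cases hyl : y.length ≤ l
      · exact .inl (by simpa using hα.append (.cons hr' hyl hβ))
      · obtain ⟨y', hder, hy'⟩ := hshort r hr y hr'
        refine .inr ⟨u, y, v, y', rfl, hz.length_le.trans (Nat.mul_le_mul_right l (hC r hr)),
          by omega, ?_⟩
        simpa using hα.derives.append (hder.append hβ.derives)
    · exact .inr ⟨u, y, v, y', hw, hy, hy', .head hstep hder⟩

lemma exists_forall_mem_le {α : Type*} (s : List α) (f : α → ℕ) : ∃ b, ∀ a ∈ s, f a ≤ b :=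
  ⟨(s.map f).sum, fun _ ha ↦ List.le_sum_of_mem (List.mem_map_of_mem ha)⟩

theorem CFG.exists_shrinkable_factor (G : CFG T) :
    ∃ p, ∀ w ∈ G.lang, p < w.length → ∃ u y v y' : List T, w = u ++ y ++ v ∧
      y.length ≤ p ∧ y'.length < y.length ∧ u ++ y' ++ v ∈ G.lang := by
  obtain ⟨C, hC⟩ := exists_forall_mem_le G.rules fun r ↦ r.2.length
  obtain ⟨l, hl⟩ := exists_forall_mem_le G.rules fun r ↦
    sInf (List.length '' {w : List T | Derives G.rules [Sum.inl r.1] (w.map Sum.inr)})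
  refine ⟨(C + 1) * (l + 1), fun w hw hlen ↦ ?_⟩
  have hshort : ∀ r ∈ G.rules, ∀ w : List T, Derives G.rules [Sum.inl r.1] (w.map Sum.inr) →
      ∃ w' : List T, Derives G.rules [Sum.inl r.1] (w'.map Sum.inr) ∧ w'.length ≤ l + 1 := by
    intro r hr w hw
    have hne : {w : List T | Derives G.rules [Sum.inl r.1] (w.map Sum.inr)}.Nonempty := ⟨w, hw⟩
    obtain ⟨w', hw', hmin⟩ := Nat.sInf_mem (hne.image List.length)
    exact ⟨w', hw', hmin.trans_le ((hl r hr).trans l.le_succ)⟩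
  obtain h | ⟨u, y, v, y', hw, hy, hy', hder⟩ :=
    shortYield_or_exists_shrinkable_factor l.succ_pos hC hshort hw
  · have hle := h.length_le
    simp only [List.length_singleton, Nat.succ_mul] at hle hlen
    omega
  · exact ⟨u, y, v, y', hw, hy.trans (Nat.mul_le_mul_right _ C.le_succ), hy', hder⟩

end Shrinking

section BlockLanguage

variable {T : Type} {a b : T} {n j : ℕ}

/-- The word `aⁿbⁿaⁿ`. -/
def blockWord (a b : T) (n : ℕ) : List T :=
  List.replicate n a ++ (List.replicate n b ++ List.replicate n a)

/-- The language `{aⁿbⁿaⁿ | n ≥ 1}`. -/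
def blockLang (a b : T) : Set (List T) := Set.range fun n ↦ blockWord a b (n + 1)

lemma length_blockWord : (blockWord a b n).length = 3 * n := by
  simp only [blockWord, List.length_append, List.length_replicate]
  omega

lemma reverse_blockWord : (blockWord a b n).reverse = blockWord a b n := by
  simp [blockWord]

lemma count_blockWord [DecidableEq T] (hab : a ≠ b) : (blockWord a b n).count b = n := by
  simp [blockWord, List.count_replicate, hab]

lemma idxOf_blockWord [DecidableEq T] (hab : a ≠ b) : (blockWord a b n).idxOf b = n := by
  cases n with
  | zero => rfl
  | succ n =>
    have hb : b ∉ List.replicate (n + 1) a := by simp [hab.symm]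
    rw [blockWord, List.idxOf_append_of_notMem hb]
    simp [List.replicate_succ]

/-- The first `b` of `aⁿbⁿaⁿ` has position `n`. -/
lemma eq_of_blockWord_eq_append (hab : a ≠ b) {u s t : List T} (hb : b ∈ u)
    (hn : blockWord a b n = u ++ s) (hj : blockWord a b j = u ++ t) : j = n := by
  classical
  calc j = (u ++ t).idxOf b := by rw [← hj, idxOf_blockWord hab]
    _ = (u ++ s).idxOf b := by
      rw [List.idxOf_append_of_mem hb, List.idxOf_append_of_mem hb]
    _ = n := by rw [← hn, idxOf_blockWord hab]

/-- A factor of length less than `n` misses some `b` of `aⁿbⁿaⁿ`, so that one of `u` and `v`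
determines `n`. -/
lemma eq_of_blockWord_eq_append_append (hab : a ≠ b) {u y v y' : List T} (hy : y.length < n)
    (hn : blockWord a b n = u ++ y ++ v) (hj : blockWord a b j = u ++ y' ++ v) : j = n := by
  classical
  have hcount : u.count b + y.count b + v.count b = n := by
    rw [← List.count_append, ← List.count_append, ← hn, count_blockWord hab]
  have hyb : y.count b ≤ y.length := List.count_le_length
  obtain hu | hv : 0 < u.count b ∨ 0 < v.count b := by omega
  · rw [List.append_assoc] at hn hj
    exact eq_of_blockWord_eq_append hab (List.count_pos_iff.1 hu) hn hj
  · have hbv : b ∈ v.reverse := List.mem_reverse.2 (List.count_pos_iff.1 hv)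
    refine eq_of_blockWord_eq_append hab hbv (s := (u ++ y).reverse) (t := (u ++ y').reverse)
      ?_ ?_
    · rw [← List.reverse_append, ← hn, reverse_blockWord]
    · rw [← List.reverse_append, ← hj, reverse_blockWord]

theorem blockLang_notMem_CFFam (hab : a ≠ b) : blockLang a b ∉ CFFam T := by
  rintro ⟨G, hG⟩
  have mem_iff : ∀ w ≠ [], w ∈ G.lang ↔ w ∈ blockLang a b := fun w hw ↦ by
    simpa [hw] using Set.ext_iff.1 hG w
  have ne_nil_of_length_pos {w : List T} (hw : 0 < w.length) : w ≠ [] := List.length_pos_iff.1 hw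
  obtain ⟨p, hp⟩ := G.exists_shrinkable_factor
  have hlen : (blockWord a b (p + 1)).length = 3 * (p + 1) := length_blockWord
  obtain ⟨u, y, v, y', hw, hy, hy', hw'⟩ := hp (blockWord a b (p + 1))
    ((mem_iff _ (ne_nil_of_length_pos (by omega))).2 ⟨p, rfl⟩) (by omega)
  have hlen' : (u ++ y ++ v).length = 3 * (p + 1) := hw ▸ hlen
  simp only [List.length_append] at hlen'
  obtain ⟨j, hj⟩ := (mem_iff _ (ne_nil_of_length_pos (by
    simp only [List.length_append]; omega))).1 hw'
  have hjp : j + 1 = p + 1 :=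
    eq_of_blockWord_eq_append_append hab (Nat.lt_succ_of_le hy) hw hj
  have hlenj := congrArg List.length hj
  simp only [length_blockWord, List.length_append] at hlenj
  omega

end BlockLanguage

section BlockSystem

variable {T : Type} {a b : T} {n i : ℕ} {X Y z : SForm T}

/-- The rules of the component of `blockSystem` that adds one letter to each block, with
nonterminals `A = 2`, `A' = 3` for the first two blocks and `B = 4`, `B' = 5` for the third. -/
def growRules (a b : T) : List (Rule T) :=
  [(2, [.inr a, .inl 3, .inr b]), (2, [.inr a, .inr b]), (4, [.inr a, .inl 5]), (4, [.inr a])]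

/-- The rules of the component of `blockSystem` that turns `A'` and `B'` back into `A` and `B`.
The start symbol `0` reaches `AB` in two steps, through the auxiliary nonterminal `1`. -/
def renewRules (T : Type) : List (Rule T) :=
  [(0, [.inl 1]), (1, [.inl 2, .inl 4]), (3, [.inl 2]), (5, [.inl 4])]

/-- A two-component system that generates `aⁿbⁿaⁿ` in mode `(t ∧ =2)`. -/
def blockSystem (a b : T) : CDGS T where
  deg := 2
  start := 0
  comp := ![growRules a b, renewRules T]

/-- The form `aⁿ X bⁿ aⁿ Y`. -/
def frame (a b : T) (n : ℕ) (X Y : SForm T) : SForm T :=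
  (List.replicate n a).map .inr ++ (X ++
    ((List.replicate n b ++ List.replicate n a).map .inr ++ Y))

lemma frame_grow :
    frame a b n (.inr a :: X ++ [.inr b]) (.inr a :: Y) = frame a b (n + 1) X Y := by
  simp [frame, List.replicate_succ' (a := a), List.replicate_succ (a := b)]

lemma frame_nil_nil : frame a b n [] [] = (blockWord a b n).map .inr := by
  simp [frame, blockWord]

lemma blocked_frame_iff {P : List (Rule T)} :
    Blocked P (frame a b n X Y) ↔ Blocked P X ∧ Blocked P Y := by
  simp [Blocked, frame, forall_and]

lemma stepsN_frame_iff {P : List (Rule T)} {k : ℕ} :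
    StepsN P k (frame a b n X Y) z ↔ ∃ i j X' Y', i + j = k ∧ frame a b n X' Y' = z ∧
      StepsN P i X X' ∧ StepsN P j Y Y' := by
  constructor
  · intro h
    obtain ⟨_, _, _, _, rfl, rfl, hu, h⟩ := stepsN_append_iff.1 h
    obtain ⟨i, _, X', _, rfl, rfl, hX, h⟩ := stepsN_append_iff.1 h
    obtain ⟨_, j, _, Y', rfl, rfl, hv, hY⟩ := stepsN_append_iff.1 h
    obtain ⟨rfl, rfl⟩ := (blocked_map_inr _).stepsN_iff.1 hu
    obtain ⟨rfl, rfl⟩ := (blocked_map_inr _).stepsN_iff.1 hv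
    exact ⟨i, j, X', Y', by omega, rfl, hX, hY⟩
  · rintro ⟨i, j, X', Y', rfl, rfl, hX, hY⟩
    have terminal (w : List T) : StepsN P 0 (w.map Sum.inr) (w.map Sum.inr) := rfl
    simpa only [frame, Nat.zero_add] using
      (terminal (.replicate n a)).append (hX.append
        ((terminal (.replicate n b ++ .replicate n a)).append hY))

lemma blocked_of_mem_growRules :
    ∀ A z, (A, z) ∈ growRules a b → Blocked (growRules a b) z := by
  intro A z h
  obtain ⟨-, rfl⟩ | ⟨-, rfl⟩ | ⟨-, rfl⟩ | ⟨-, rfl⟩ : A = 2 ∧ z = [.inr a, .inl 3, .inr b] ∨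
      A = 2 ∧ z = [.inr a, .inr b] ∨ A = 4 ∧ z = [.inr a, .inl 5] ∨ A = 4 ∧ z = [.inr a] := by
    simpa [growRules] using h
  all_goals simp [Blocked, growRules]

lemma stepsN_growRules_inl_two_iff :
    StepsN (growRules a b) i [.inl 2] z ↔ i = 0 ∧ [.inl 2] = z ∨
      i = 1 ∧ ∃ X : SForm T, (X = [] ∨ X = [.inl 3]) ∧ .inr a :: X ++ [.inr b] = z := by
  rw [stepsN_singleton_iff_of_blocked (blocked_of_mem_growRules 2)]
  simp [growRules, or_and_right, exists_or, eq_comm, or_comm]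

lemma stepsN_growRules_inl_four_iff :
    StepsN (growRules a b) i [.inl 4] z ↔ i = 0 ∧ [.inl 4] = z ∨
      i = 1 ∧ ∃ Y : SForm T, (Y = [] ∨ Y = [.inl 5]) ∧ .inr a :: Y = z := by
  rw [stepsN_singleton_iff_of_blocked (blocked_of_mem_growRules 4)]
  simp [growRules, or_and_right, exists_or, eq_comm, or_comm]

/-- Each of `A` and `B` allows only one step, so two steps rewrite both. -/
lemma stepsN_growRules_frame_iff :
    StepsN (growRules a b) 2 (frame a b n [.inl 2] [.inl 4]) z ↔
      ∃ X Y, (X = [] ∨ X = [.inl 3]) ∧ (Y = [] ∨ Y = [.inl 5]) ∧ frame a b (n + 1) X Y = z := by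
  simp only [stepsN_frame_iff, stepsN_growRules_inl_two_iff, stepsN_growRules_inl_four_iff]
  constructor
  · rintro ⟨i, j, _, _, hij, rfl, ⟨rfl, rfl⟩ | ⟨rfl, X, hX, rfl⟩, ⟨rfl, rfl⟩ | ⟨rfl, Y, hY, rfl⟩⟩
      <;> try omega
    exact ⟨X, Y, hX, hY, frame_grow.symm⟩
  · rintro ⟨X, Y, hX, hY, rfl⟩
    exact ⟨1, 1, _, _, rfl, frame_grow, .inr ⟨rfl, X, hX, rfl⟩, .inr ⟨rfl, Y, hY, rfl⟩⟩

lemma stepsN_renewRules_start_iff :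
    StepsN (renewRules T) 2 [.inl 0] z ↔ frame a b 0 [.inl 2] [.inl 4] = z := by
  simp [StepsN, rStep_singleton_iff, renewRules, frame, eq_comm]

lemma stepsN_renewRules_primed_iff {A : ℕ} (hA : A = 2 ∨ A = 4)
    (hX : X = [] ∨ X = [.inl (A + 1)]) :
    StepsN (renewRules T) i X z ↔
      i = 0 ∧ X = z ∨ i = 1 ∧ X = [.inl (A + 1)] ∧ [.inl A] = z := by
  have mem_iff (z : SForm T) : (A + 1, z) ∈ renewRules T ↔ [.inl A] = z := by
    obtain rfl | rfl := hA <;> simp [renewRules, eq_comm]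
  have blocked : Blocked (renewRules T) [.inl A] := by
    obtain rfl | rfl := hA <;> simp [Blocked, renewRules]
  obtain rfl | rfl := hX
  · simpa using (blocked_map_inr []).stepsN_iff
  · rw [stepsN_singleton_iff_of_blocked fun z hz ↦ (mem_iff z).1 hz ▸ blocked, mem_iff]
    simp

lemma stepsN_renewRules_frame_iff (hX : X = [] ∨ X = [.inl 3]) (hY : Y = [] ∨ Y = [.inl 5]) :
    StepsN (renewRules T) 2 (frame a b n X Y) z ↔
      X = [.inl 3] ∧ Y = [.inl 5] ∧ frame a b n [.inl 2] [.inl 4] = z := by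
  simp only [stepsN_frame_iff, stepsN_renewRules_primed_iff (.inl rfl) hX,
    stepsN_renewRules_primed_iff (.inr rfl) hY]
  constructor
  · rintro ⟨i, j, _, _, hij, rfl, ⟨rfl, -⟩ | ⟨rfl, hX, rfl⟩, ⟨rfl, -⟩ | ⟨rfl, hY, rfl⟩⟩
      <;> try omega
    exact ⟨hX, hY, rfl⟩
  · rintro ⟨hX, hY, rfl⟩
    exact ⟨1, 1, _, _, rfl, rfl, .inr ⟨rfl, hX, rfl⟩, .inr ⟨rfl, hY, rfl⟩⟩

lemma blocked_growRules_frame (hX : X = [] ∨ X = [.inl 3]) (hY : Y = [] ∨ Y = [.inl 5]) :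
    Blocked (growRules a b) (frame a b n X Y) := by
  rw [blocked_frame_iff]
  obtain rfl | rfl := hX <;> obtain rfl | rfl := hY <;> simp [Blocked, growRules]

lemma blocked_renewRules_frame : Blocked (renewRules T) (frame a b n [.inl 2] [.inl 4]) :=
  blocked_frame_iff.2 ⟨by simp [Blocked, renewRules], by simp [Blocked, renewRules]⟩

lemma blockSystem_modeStep_iff :
    (blockSystem a b).ModeStep (.conj .t (.eq 2)) X Y ↔
      (StepsN (growRules a b) 2 X Y ∧ Blocked (growRules a b) Y) ∨
        StepsN (renewRules T) 2 X Y ∧ Blocked (renewRules T) Y :=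
  CDGS.modeStep_t_eq_iff.trans Fin.exists_fin_two

/-- The sentential forms that `blockSystem` can reach. -/
inductive BlockForm (a b : T) : SForm T → Prop
  | start : BlockForm a b [.inl 0]
  | active (n : ℕ) : BlockForm a b (frame a b n [.inl 2] [.inl 4])
  | resting (n : ℕ) {X Y : SForm T} (hX : X = [] ∨ X = [.inl 3]) (hY : Y = [] ∨ Y = [.inl 5]) :
      BlockForm a b (frame a b (n + 1) X Y)

namespace BlockForm

lemma modeStep (hX : BlockForm a b X)
    (h : (blockSystem a b).ModeStep (.conj .t (.eq 2)) X Y) : BlockForm a b Y := by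
  obtain ⟨h, -⟩ | ⟨h, -⟩ := blockSystem_modeStep_iff.1 h
  · cases hX with
    | start =>
      have blocked : Blocked (growRules a b) [.inl 0] := by simp [Blocked, growRules]
      simp [blocked.stepsN_iff] at h
    | active n =>
      obtain ⟨X, Y, hX, hY, rfl⟩ := stepsN_growRules_frame_iff.1 h
      exact .resting n hX hY
    | resting n hX hY => simp [(blocked_growRules_frame hX hY).stepsN_iff] at h
  · cases hX with
    | start => exact stepsN_renewRules_start_iff.1 h ▸ .active 0
    | active n => simp [blocked_renewRules_frame.stepsN_iff] at h
    | resting n hX hY =>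
      obtain ⟨-, -, rfl⟩ := (stepsN_renewRules_frame_iff hX hY).1 h
      exact .active (n + 1)

lemma mem_blockLang {w : List T} (h : BlockForm a b (w.map Sum.inr)) : w ∈ blockLang a b := by
  generalize hx : (w.map Sum.inr : SForm T) = x at h
  have terminal (A : ℕ) : Sum.inl A ∉ x := by simp [← hx]
  cases h with
  | start => exact absurd (List.mem_singleton_self _) (terminal 0)
  | active n => exact absurd (by simp [frame]) (terminal 2)
  | resting n hX hY =>
    obtain rfl | rfl := hX
    · obtain rfl | rfl := hY
      · rw [frame_nil_nil] at hx
        exact ⟨n, (Sum.inr_injective.list_map hx).symm⟩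
      · exact absurd (by simp [frame]) (terminal 5)
    · exact absurd (by simp [frame]) (terminal 3)

end BlockForm

lemma blockSystem_modeStep_grow (hX : X = [] ∨ X = [.inl 3]) (hY : Y = [] ∨ Y = [.inl 5]) :
    (blockSystem a b).ModeStep (.conj .t (.eq 2)) (frame a b n [.inl 2] [.inl 4])
      (frame a b (n + 1) X Y) :=
  blockSystem_modeStep_iff.2
    (.inl ⟨stepsN_growRules_frame_iff.2 ⟨X, Y, hX, hY, rfl⟩, blocked_growRules_frame hX hY⟩)

lemma blockSystem_modeStep_renew :
    (blockSystem a b).ModeStep (.conj .t (.eq 2)) (frame a b n [.inl 3] [.inl 5])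
      (frame a b n [.inl 2] [.inl 4]) :=
  blockSystem_modeStep_iff.2
    (.inr ⟨(stepsN_renewRules_frame_iff (.inr rfl) (.inr rfl)).2 ⟨rfl, rfl, rfl⟩,
      blocked_renewRules_frame⟩)

lemma blockSystem_derives_frame (n : ℕ) :
    Relation.TransGen ((blockSystem a b).ModeStep (.conj .t (.eq 2))) [.inl 0]
      (frame a b n [.inl 2] [.inl 4]) := by
  induction n with
  | zero =>
    exact .single (blockSystem_modeStep_iff.2
      (.inr ⟨stepsN_renewRules_start_iff.2 rfl, blocked_renewRules_frame⟩))
  | succ n ih =>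
    exact (ih.tail (blockSystem_modeStep_grow (.inr rfl) (.inr rfl))).tail
      blockSystem_modeStep_renew

theorem lang_blockSystem : (blockSystem a b).lang (.conj .t (.eq 2)) = blockLang a b := by
  ext w
  constructor
  · intro hw
    have reachable {x : SForm T} (hx : Relation.TransGen
        ((blockSystem a b).ModeStep (.conj .t (.eq 2))) [.inl 0] x) : BlockForm a b x := by
      induction hx with
      | single h => exact BlockForm.start.modeStep h
      | tail _ h ih => exact ih.modeStep h
    exact (reachable hw).mem_blockLang
  · rintro ⟨n, rfl⟩
    have grow := blockSystem_modeStep_grow (a := a) (b := b) (n := n) (.inl rfl) (.inl rfl)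
    rw [frame_nil_nil] at grow
    exact (blockSystem_derives_frame n).tail grow

theorem blockLang_mem_CDFam (a b : T) (lf : Bool) :
    blockLang a b ∈ CDFam T lf 2 (.conj .t (.eq 2)) := by
  refine ⟨blockSystem a b, le_rfl, fun _ ↦ Fin.forall_fin_two.2 ?_, ?_⟩
  · simp [blockSystem, growRules, renewRules]
  · rw [lang_blockSystem, EqL]

end BlockSystem

theorem stmt4_general {T : Type} [Nontrivial T] (lf : Bool) :
    CFFamFin T ⊂
      { L | ∃ k : ℕ, 1 ≤ k ∧ L ∈ CDFam T lf 2 (Mode.conj Mode.t (Mode.eq k)) } := by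
  obtain ⟨a, b, hab⟩ := exists_pair_ne T
  have separated : blockLang a b ∉ CFFamFin T :=
    fun ⟨_, _, G, hG, _⟩ ↦ blockLang_notMem_CFFam hab ⟨G, hG⟩
  exact Set.ssubset_iff_exists.2 ⟨fun _ ↦ exists_mem_CDFam_two_of_mem_CFFamFin lf,
    blockLang a b, ⟨2, one_le_two, blockLang_mem_CDFam a b lf⟩, separated⟩

/-- L_fin(CF) ⊊ ⋃_{k∈ℕ} L(CD_2, CF[−λ], (t∧=k)),
both with and without erasing rules. -/
theorem stmt4 (lf : Bool) :
    CFFamFin ℕ ⊂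
      { L | ∃ k : ℕ, 1 ≤ k ∧ L ∈ CDFam ℕ lf 2 (Mode.conj Mode.t (Mode.eq k)) } :=
  stmt4_general lf

end CDHybrid
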